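/- arXiv:1502.06144 — 4 statements merged into one kernel-verified Lean document; each statement's English description precedes it below -/
import Mathlib

section
/- Fix k ≥ 1 and Δ > 0, and for each n ≥ k let m = m(n) = ⌈Δ n⌉ and let V = (V_1,…,V_m) be m i.i.d. uniform k-flats of F_2^n (law P_unif). Then for every ε > 0 there exists N such that for all n ≥ N, E[Z(V)^2] / (E[Z(V)])^2 ≤ 1 + ε + 1/E[Z(V)]. -/
open scoped BigOperators Classical
open Filter Topology

abbrev F2n (n : ℕ) := Fin n → ZMod 2

def IsFlat (n k : ℕ) (W : Set (F2n n)) : Prop :=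
  ∃ A : AffineSubspace (ZMod 2) (F2n n),
    (A : Set (F2n n)) = W ∧ W.Nonempty ∧ Module.finrank (ZMod 2) A.direction = n - k

def Flat (n k : ℕ) : Type := {W : Set (F2n n) // IsFlat n k W}

noncomputable instance (n k : ℕ) : Fintype (Flat n k) := by
  unfold Flat; exact Fintype.ofFinite _

noncomputable def q0 (n k : ℕ) : Flat n k → ℝ :=
  fun _ => (Fintype.card (Flat n k) : ℝ)⁻¹

noncomputable def qx (n k : ℕ) (x : F2n n) : Flat n k → ℝ :=
  fun W => if x ∈ W.1 then 0 else (Nat.card {W : Flat n k // x ∉ W.1} : ℝ)⁻¹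

noncomputable def prob {α : Type*} [Fintype α] (p : α → ℝ) (E : Set α) : ℝ :=
  ∑ a, if a ∈ E then p a else 0

noncomputable def expect {α : Type*} [Fintype α] (p : α → ℝ) (f : α → ℝ) : ℝ :=
  ∑ a, p a * f a

noncomputable def Punif (n k m : ℕ) : (Fin m → Flat n k) → ℝ :=
  fun V => ∏ j, q0 n k (V j)

noncomputable def Pplanted (n k m : ℕ) : (Fin m → Flat n k) → ℝ :=
  fun V => ((2:ℝ)^n)⁻¹ * ∑ x : F2n n, ∏ j, qx n k x (V j)

noncomputable def Z (n k m : ℕ) (V : Fin m → Flat n k) : ℕ :=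
  Nat.card {x : F2n n // ∀ j, x ∉ (V j).1}

noncomputable def satCount (n k m : ℕ) (V : Fin m → Flat n k) (x : F2n n) : ℕ :=
  Nat.card {j : Fin m // x ∉ (V j).1}

noncomputable def maxSat (n k m : ℕ) (V : Fin m → Flat n k) : ℕ :=
  Finset.univ.sup (fun x : F2n n => satCount n k m V x)

noncomputable def qxpi (n k : ℕ) (x : F2n n) (π : ℝ) : Flat n k → ℝ :=
  fun W => (1 - π) * q0 n k W + π * qx n k x W

noncomputable def Pplantedpi (n k m : ℕ) (π : ℝ) : (Fin m → Flat n k) → ℝ :=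
  fun V => ((2:ℝ)^n)⁻¹ * ∑ x : F2n n, ∏ j, qxpi n k x π (V j)

noncomputable def DeltaK (k : ℕ) : ℝ :=
  Real.log (1/2) / Real.log (1 - ((2:ℝ)^k)⁻¹)

theorem exists_functional {n : ℕ} (u v : F2n n) (hu : u ≠ 0) (hv : v ≠ 0) :
    ∃ f : Module.Dual (ZMod 2) (F2n n), f u = 1 ∧ f v = 1 := by
  have key : ∀ a : ZMod 2, a ≠ 0 → a = 1 := by decide
  have key' : ∀ a : ZMod 2, a ≠ 1 → a = 0 := by decide
  obtain ⟨i, hi⟩ := Function.ne_iff.mp hu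
  obtain ⟨j, hj⟩ := Function.ne_iff.mp hv
  have hi' := key _ hi
  have hj' := key _ hj
  by_cases h1 : v i = 1
  · exact ⟨LinearMap.proj i, hi', h1⟩
  by_cases h2 : u j = 1
  · exact ⟨LinearMap.proj j, h2, hj'⟩
  refine ⟨(LinearMap.proj i : F2n n →ₗ[ZMod 2] ZMod 2) + LinearMap.proj j, ?_, ?_⟩
  · simp [hi', key' _ h2]
  · simp [hj', key' _ h1]

theorem exists_linEquiv {n : ℕ} (u v : F2n n) (hu : u ≠ 0) (hv : v ≠ 0) :
    ∃ e : F2n n ≃ₗ[ZMod 2] F2n n, e u = v := by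
  obtain ⟨f, h1, h2⟩ := exists_functional u v hu hv
  have h : f (v - u) = 0 := by simp [h1, h2]
  exact ⟨LinearEquiv.transvection h, by rw [LinearEquiv.transvection.apply, h1]; simp⟩

theorem isFlat_image {n k : ℕ} (e : F2n n ≃ᵃ[ZMod 2] F2n n) {W : Set (F2n n)}
    (hW : IsFlat n k W) : IsFlat n k (Set.image e W) := by
  obtain ⟨A, rfl, hne, hd⟩ := hW
  refine ⟨A.map e.toAffineMap, ?_, hne.image _, ?_⟩
  · rw [AffineSubspace.coe_map]; rfl
  · rw [AffineSubspace.map_direction, ← hd]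
    exact LinearEquiv.finrank_map_eq e.linear A.direction

noncomputable def flatEquiv {n k : ℕ} (e : F2n n ≃ᵃ[ZMod 2] F2n n) : Flat n k ≃ Flat n k where
  toFun W := ⟨Set.image e W.1, isFlat_image e W.2⟩
  invFun W := ⟨Set.image e.symm W.1, isFlat_image e.symm W.2⟩
  left_inv W := Subtype.ext (by simp [Set.image_image])
  right_inv W := Subtype.ext (by
    change Set.image e (Set.image e.symm W.1) = W.1
    rw [Set.image_image]; simp only [AffineEquiv.apply_symm_apply, Set.image_id'])

theorem mem_flatEquiv {n k : ℕ} (e : F2n n ≃ᵃ[ZMod 2] F2n n) (W : Flat n k) (x : F2n n) :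
    e x ∈ (flatEquiv e W).1 ↔ x ∈ W.1 :=
  e.injective.mem_set_image

noncomputable def ind {n k : ℕ} (x : F2n n) (W : Flat n k) : ℝ := if x ∈ W.1 then 1 else 0

noncomputable def cc (n k : ℕ) (x : F2n n) : ℝ := ∑ W : Flat n k, ind x W
noncomputable def rr (n k : ℕ) (x y : F2n n) : ℝ := ∑ W : Flat n k, ind x W * ind y W

theorem ind_flatEquiv {n k : ℕ} (e : F2n n ≃ᵃ[ZMod 2] F2n n) (W : Flat n k) (x : F2n n) :
    ind (e x) (flatEquiv e W) = ind x W := by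
  simp only [ind, mem_flatEquiv]

theorem cc_map {n k : ℕ} (e : F2n n ≃ᵃ[ZMod 2] F2n n) (x : F2n n) :
    cc n k (e x) = cc n k x := by
  unfold cc
  rw [← Equiv.sum_comp (flatEquiv e)]
  simp only [ind_flatEquiv]

theorem rr_map {n k : ℕ} (e : F2n n ≃ᵃ[ZMod 2] F2n n) (x y : F2n n) :
    rr n k (e x) (e y) = rr n k x y := by
  unfold rr
  rw [← Equiv.sum_comp (flatEquiv e)]
  simp only [ind_flatEquiv]

theorem cc_eq {n k : ℕ} (x y : F2n n) : cc n k x = cc n k y := by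
  have := cc_map (k := k) (AffineEquiv.constVAdd (ZMod 2) (F2n n) (x - y)) y
  simpa using this

theorem rr_eq {n k : ℕ} (x y z : F2n n) (hy : y ≠ x) (hz : z ≠ x) :
    rr n k x y = rr n k x z := by
  obtain ⟨e, he⟩ := exists_linEquiv (y - x) (z - x) (sub_ne_zero.2 hy) (sub_ne_zero.2 hz)
  have h := rr_map (k := k)
    ((AffineEquiv.constVAdd (ZMod 2) (F2n n) (-x)).trans
      (e.toAffineEquiv.trans (AffineEquiv.constVAdd (ZMod 2) (F2n n) x))) x y
  have h2 : e (-x + y) = z - x := by rw [← he]; congr 1; abel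
  simp [h2] at h
  exact h.symm

theorem sum_ind {n k : ℕ} (W : Flat n k) : ∑ x : F2n n, ind x W = 2 ^ (n - k) := by
  obtain ⟨W, A, rfl, ⟨p, hp⟩, hd⟩ := W
  unfold ind
  simp only [Finset.sum_boole]
  rw [← Fintype.card_subtype, ← Nat.card_eq_fintype_card]
  have hp' : p ∈ A := hp
  have e : {x // x ∈ (A : Set (F2n n))} ≃ A.direction :=
    { toFun := fun x => ⟨x.1 -ᵥ p, AffineSubspace.vsub_mem_direction x.2 hp'⟩
      invFun := fun v => ⟨v.1 +ᵥ p, AffineSubspace.vadd_mem_of_mem_direction v.2 hp'⟩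
      left_inv := fun x => Subtype.ext (by simp)
      right_inv := fun v => Subtype.ext (by simp) }
  rw [Nat.card_congr e, Nat.card_eq_fintype_card,
    Module.card_eq_pow_finrank (K := ZMod 2), hd, ZMod.card]
  push_cast; rfl

theorem ind_sq {n k : ℕ} (x : F2n n) (W : Flat n k) : ind x W * ind x W = ind x W := by
  unfold ind; split_ifs <;> simp

theorem cc_nonneg {n k : ℕ} (x : F2n n) : 0 ≤ cc n k x :=
  Finset.sum_nonneg fun W _ => by unfold ind; split_ifs <;> simp

theorem rr_le {n k : ℕ} (hkn : k ≤ n) (x y : F2n n) (hxy : y ≠ x) :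
    rr n k x y * Fintype.card (Flat n k) ≤ cc n k x ^ 2 := by
  have hcard : Fintype.card (F2n n) = 2 ^ n := by simp [ZMod.card]
  have h1 : (2:ℝ) ^ n * cc n k x = Fintype.card (Flat n k) * 2 ^ (n - k) := by
    have : ∑ z : F2n n, cc n k z = Fintype.card (Flat n k) * 2 ^ (n - k) := by
      unfold cc
      rw [Finset.sum_comm]
      simp [sum_ind]
    rw [← this, Finset.sum_congr rfl (fun z _ => cc_eq z x), Finset.sum_const,
      Finset.card_univ, hcard]
    simp
  have h2 : cc n k x + ((2:ℝ) ^ n - 1) * rr n k x y = cc n k x * 2 ^ (n - k) := by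
    have : ∑ z : F2n n, rr n k x z = cc n k x * 2 ^ (n - k) := by
      unfold rr
      rw [Finset.sum_comm]
      simp only [← Finset.mul_sum, sum_ind]
      rw [← Finset.sum_mul]; rfl
    rw [← this, ← Finset.add_sum_erase _ _ (Finset.mem_univ x)]
    rw [Finset.sum_congr rfl (fun z hz => rr_eq x z y (Finset.ne_of_mem_erase hz) hxy),
      Finset.sum_const, Finset.card_erase_of_mem (Finset.mem_univ x), Finset.card_univ, hcard]
    have : rr n k x x = cc n k x := by simp only [rr, cc, ind_sq]
    rw [this, nsmul_eq_mul, Nat.cast_sub Nat.one_le_two_pow]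
    simp
  have hn : n ≠ 0 := by
    rintro rfl
    exact hxy (Subsingleton.elim _ _)
  have hn1 : (1:ℝ) < 2 ^ n := one_lt_pow₀ (by norm_num) hn
  have hpow : (2:ℝ) ^ n = 2 ^ (n - k) * 2 ^ k := by rw [← pow_add]; congr 1; omega
  have hk1 : (1:ℝ) ≤ 2 ^ k := one_le_pow₀ (by norm_num)
  have hA : (0:ℝ) < 2 ^ (n - k) := by positivity
  generalize rr n k x y = r at *
  generalize cc n k x = c at *
  generalize (Fintype.card (Flat n k) : ℝ) = M at *
  have hM : M = c * 2 ^ k := by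
    apply mul_right_cancel₀ hA.ne'
    rw [← h1, hpow]; ring
  have hr : (2 ^ n - 1) * (r * M) ≤ (2 ^ n - 1) * c ^ 2 := by
    have : ((2:ℝ) ^ n - 1) * (r * M) = (c * 2 ^ (n - k) - c) * (c * 2 ^ k) := by
      rw [← hM, ← h2]; ring
    rw [this, hpow]
    nlinarith [mul_nonneg (sq_nonneg c) (sub_nonneg.2 hk1)]
  exact le_of_mul_le_mul_left hr (by linarith)

noncomputable def aa (n k : ℕ) (x : F2n n) : ℝ := ∑ W : Flat n k, q0 n k W * (1 - ind x W)
noncomputable def bb (n k : ℕ) (x y : F2n n) : ℝ :=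
  ∑ W : Flat n k, q0 n k W * ((1 - ind x W) * (1 - ind y W))

theorem aa_form {n k : ℕ} (x : F2n n) :
    aa n k x = (Fintype.card (Flat n k) : ℝ)⁻¹ * (Fintype.card (Flat n k) - cc n k x) := by
  simp [aa, cc, q0, ← Finset.mul_sum, Finset.sum_sub_distrib]

theorem bb_form {n k : ℕ} (x y : F2n n) :
    bb n k x y = (Fintype.card (Flat n k) : ℝ)⁻¹ *
      (Fintype.card (Flat n k) - cc n k x - cc n k y + rr n k x y) := by
  have : ∀ W : Flat n k, (1 - ind x W) * (1 - ind y W)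
      = 1 - ind x W - ind y W + ind x W * ind y W := fun W => by ring
  simp [bb, cc, rr, q0, ← Finset.mul_sum, this, Finset.sum_sub_distrib, Finset.sum_add_distrib]

theorem ind_le {n k : ℕ} (x : F2n n) (W : Flat n k) : 0 ≤ 1 - ind x W := by
  unfold ind; split_ifs <;> simp

theorem q0_nonneg {n k : ℕ} (W : Flat n k) : 0 ≤ q0 n k W := by
  unfold q0; positivity

theorem bb_self {n k : ℕ} (x : F2n n) : bb n k x x = aa n k x := by
  unfold bb aa
  refine Finset.sum_congr rfl fun W _ => ?_
  have := ind_sq x W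
  congr 1
  linear_combination this

theorem bb_le {n k : ℕ} (hkn : k ≤ n) (x y : F2n n) (hxy : y ≠ x) :
    bb n k x y ≤ aa n k x ^ 2 := by
  have h := rr_le hkn x y hxy
  rw [bb_form, aa_form, cc_eq y x]
  generalize rr n k x y = r at *
  generalize cc n k x = c at *
  rcases (Nat.cast_nonneg (α := ℝ) (Fintype.card (Flat n k))).eq_or_lt with h0 | h0
  · rw [← h0]; simp
  generalize (Fintype.card (Flat n k) : ℝ) = M at *
  rw [mul_pow, inv_pow, ← div_eq_inv_mul, ← div_eq_inv_mul, div_le_div_iff₀ h0 (by positivity)]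
  nlinarith [mul_le_mul_of_nonneg_left h h0.le]

theorem Z_form {n k m : ℕ} (V : Fin m → Flat n k) :
    (Z n k m V : ℝ) = ∑ x : F2n n, ∏ j, (1 - ind x (V j)) := by
  unfold Z
  rw [Nat.card_eq_fintype_card, Fintype.card_subtype, Finset.card_filter]
  push_cast
  refine Finset.sum_congr rfl fun x _ => ?_
  split_ifs with h
  · rw [Finset.prod_eq_one]
    intro j _
    simp [ind, h j]
  · push Not at h
    obtain ⟨j, hj⟩ := h
    rw [Finset.prod_eq_zero (Finset.mem_univ j)]
    simp [ind, hj]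

theorem EZ {n k m : ℕ} (x₀ : F2n n) :
    expect (Punif n k m) (fun V => (Z n k m V : ℝ)) = 2 ^ n * aa n k x₀ ^ m := by
  have h : ∀ x : F2n n, aa n k x = aa n k x₀ := fun x => by
    rw [aa_form, aa_form, cc_eq x x₀]
  unfold expect Punif
  simp only [Z_form, Finset.mul_sum]
  rw [Finset.sum_comm]
  simp only [← Finset.prod_mul_distrib]
  have : ∀ x : F2n n, ∑ V : Fin m → Flat n k, ∏ j, (q0 n k (V j) * (1 - ind x (V j)))
      = aa n k x₀ ^ m := fun x => by
    rw [← h x, aa, Fintype.sum_pow]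
  simp [this, ZMod.card]

theorem EZ2 {n k m : ℕ} :
    expect (Punif n k m) (fun V => (Z n k m V : ℝ) ^ 2) = ∑ x : F2n n, ∑ y, bb n k x y ^ m := by
  unfold expect Punif
  simp only [Z_form, sq, Finset.sum_mul_sum]
  simp only [Finset.mul_sum]
  rw [Finset.sum_comm]
  refine Finset.sum_congr rfl fun x _ => ?_
  rw [Finset.sum_comm]
  refine Finset.sum_congr rfl fun y _ => ?_
  simp only [← Finset.prod_mul_distrib]
  rw [bb, Fintype.sum_pow]

theorem EZ2_le {n k m : ℕ} (hkn : k ≤ n) (x₀ : F2n n) :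
    expect (Punif n k m) (fun V => (Z n k m V : ℝ) ^ 2)
      ≤ 2 ^ n * aa n k x₀ ^ m + (2 ^ n * aa n k x₀ ^ m) ^ 2 := by
  have h : ∀ x : F2n n, aa n k x = aa n k x₀ := fun x => by
    rw [aa_form, aa_form, cc_eq x x₀]
  have ha : 0 ≤ aa n k x₀ :=
    Finset.sum_nonneg fun W _ => mul_nonneg (q0_nonneg W) (ind_le _ W)
  rw [EZ2]
  have hb : ∀ x y : F2n n, bb n k x y ^ m
      ≤ (if x = y then aa n k x₀ ^ m else 0) + (aa n k x₀ ^ m) ^ 2 := by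
    intro x y
    split_ifs with hxy
    · subst hxy
      rw [bb_self, h]
      nlinarith [sq_nonneg (aa n k x₀ ^ m)]
    · rw [zero_add, ← pow_mul, mul_comm, pow_mul, ← h x]
      refine pow_le_pow_left₀ ?_ (bb_le hkn x y (Ne.symm hxy)) m
      exact Finset.sum_nonneg fun W _ =>
        mul_nonneg (q0_nonneg W) (mul_nonneg (ind_le _ W) (ind_le _ W))
  refine (Finset.sum_le_sum fun x _ => Finset.sum_le_sum fun y _ => hb x y).trans (le_of_eq ?_)
  simp [Finset.sum_add_distrib, ZMod.card]
  ring

theorem stmt4 (k : ℕ) (hk : 1 ≤ k) (Δ : ℝ) (hΔ : 0 < Δ) :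
    ∀ ε > (0:ℝ), ∃ N : ℕ, ∀ n ≥ N, k ≤ n →
      expect (Punif n k ⌈Δ * (n:ℝ)⌉₊) (fun V => ((Z n k ⌈Δ * (n:ℝ)⌉₊ V : ℝ))^2) /
          (expect (Punif n k ⌈Δ * (n:ℝ)⌉₊) (fun V => (Z n k ⌈Δ * (n:ℝ)⌉₊ V : ℝ)))^2
        ≤ 1 + ε + (expect (Punif n k ⌈Δ * (n:ℝ)⌉₊) (fun V => (Z n k ⌈Δ * (n:ℝ)⌉₊ V : ℝ)))⁻¹ := by
  intro ε hε
  refine ⟨0, fun n _ hkn => ?_⟩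
  have h2 := EZ2_le (m := ⌈Δ * (n:ℝ)⌉₊) hkn 0
  rw [← EZ 0] at h2
  have h0 : 0 ≤ expect (Punif n k ⌈Δ * (n:ℝ)⌉₊) (fun V => (Z n k ⌈Δ * (n:ℝ)⌉₊ V : ℝ)) := by
    unfold expect Punif
    exact Finset.sum_nonneg fun V _ =>
      mul_nonneg (Finset.prod_nonneg fun j _ => q0_nonneg _) (Nat.cast_nonneg _)
  generalize expect (Punif n k ⌈Δ * (n:ℝ)⌉₊) (fun V => (Z n k ⌈Δ * (n:ℝ)⌉₊ V : ℝ)) = E at *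
  rcases h0.eq_or_lt with h0 | h0
  · rw [← h0]; simp; linarith
  rw [div_le_iff₀ (by positivity)]
  have : (1 + ε + E⁻¹) * E ^ 2 = E + E ^ 2 + ε * E ^ 2 := by
    field_simp; ring
  rw [this]
  have := mul_nonneg hε.le (sq_nonneg E)
  linarith
end

section
/- Fix k ≥ 1 and Δ > Δ_k, and for each n ≥ k let m = ⌈Δ n⌉ and let V = (V_1,…,V_m) be m i.i.d. uniform k-flats of F_2^n. Then P_unif(V is flat-satisfiable) → 0 as n → ∞. -/
open scoped BigOperators Classical
open Filter Topology

lemma flat_shift {n k : ℕ} (v : F2n n) {W : Set (F2n n)} (h : IsFlat n k W) :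
    IsFlat n k ((fun y => v + y) '' W) := by
  obtain ⟨A, rfl, hne, hd⟩ := h
  refine ⟨A.map ((AffineEquiv.constVAdd (ZMod 2) (F2n n) v) : F2n n →ᵃ[ZMod 2] F2n n), ?_,
    hne.image _, ?_⟩
  · ext y
    simp
  · rw [AffineSubspace.map_direction, ← hd]
    exact LinearEquiv.finrank_map_eq (AffineEquiv.constVAdd (ZMod 2) (F2n n) v).linear A.direction

lemma flat_card {n k : ℕ} (W : Flat n k) : Nat.card W.1 = 2 ^ (n - k) := by
  obtain ⟨W, A, rfl, ⟨p, hp⟩, hd⟩ := W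
  have e : A.direction ≃ (A : Set (F2n n)) :=
    { toFun := fun d => ⟨d.1 +ᵥ p, AffineSubspace.vadd_mem_of_mem_direction d.2 hp⟩
      invFun := fun y => ⟨y.1 -ᵥ p, AffineSubspace.vsub_mem_direction y.2 hp⟩
      left_inv := fun d => by simp
      right_inv := fun y => by simp }
  show Nat.card (A : Set (F2n n)) = _
  rw [← Nat.card_congr e, Module.natCard_eq_pow_finrank (K := ZMod 2), hd]
  simp

noncomputable def flatsThrough (n k : ℕ) (x : F2n n) : Finset (Flat n k) :=
  Finset.univ.filter (fun W => x ∈ W.1)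

lemma through_le (n k : ℕ) (x y : F2n n) :
    (flatsThrough n k x).card ≤ (flatsThrough n k y).card := by
  refine Finset.card_le_card_of_injOn
    (fun W => ⟨(fun z => (y - x) + z) '' W.1, flat_shift (y - x) W.2⟩) ?_ ?_
  · intro W hW
    simp only [flatsThrough, Finset.coe_filter, Finset.mem_univ, true_and, Set.mem_ofPred_eq] at hW ⊢
    exact ⟨x, hW, by simp⟩
  · intro W _ W' _ h
    have h2 : (fun z => (y - x) + z) '' W.1 = (fun z => (y - x) + z) '' W'.1 :=
      congrArg Subtype.val h
    exact Subtype.ext ((Set.image_injective.mpr (add_right_injective (y - x))) h2)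

lemma through_count (n k : ℕ) (x : F2n n) :
    2 ^ n * (flatsThrough n k x).card = Fintype.card (Flat n k) * 2 ^ (n - k) := by
  have h1 : ∑ y : F2n n, (flatsThrough n k y).card
      = ∑ W : Flat n k, (Finset.univ.filter (fun y : F2n n => y ∈ W.1)).card := by
    simp only [flatsThrough, Finset.card_filter]
    exact Finset.sum_comm
  have h2 : ∀ W : Flat n k, (Finset.univ.filter (fun y : F2n n => y ∈ W.1)).card = 2 ^ (n - k) := by
    intro W
    rw [← flat_card W, Nat.card_eq_fintype_card, ← Set.toFinset_card]
    congr 1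
    ext y
    simp
  have h3 : ∀ y : F2n n, (flatsThrough n k y).card = (flatsThrough n k x).card :=
    fun y => le_antisymm (through_le ..) (through_le ..)
  simp only [h2, h3, Finset.sum_const, smul_eq_mul, Finset.card_univ] at h1
  rw [← h1]
  simp [ZMod.card]

lemma sum_avoid_le (n k : ℕ) (hnk : k ≤ n) (x : F2n n) :
    ∑ W : Flat n k, (if x ∉ W.1 then q0 n k W else 0) ≤ 1 - ((2:ℝ)^k)⁻¹ := by
  have hc := through_count n k x
  have hr : (0:ℝ) ≤ 1 - ((2:ℝ)^k)⁻¹ := by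
    have : ((2:ℝ)^k)⁻¹ ≤ 1 := inv_le_one_of_one_le₀ (one_le_pow₀ (by norm_num))
    linarith
  have hs : ∑ W : Flat n k, (if x ∉ W.1 then q0 n k W else 0)
      = ((Fintype.card (Flat n k) : ℝ) - (flatsThrough n k x).card)
        * (Fintype.card (Flat n k) : ℝ)⁻¹ := by
    have : ∀ W : Flat n k, (if x ∉ W.1 then q0 n k W else 0)
       = (1 - (if x ∈ W.1 then (1:ℝ) else 0)) * (Fintype.card (Flat n k) : ℝ)⁻¹ := by
      intro W
      by_cases h : x ∈ W.1 <;> simp [h, q0]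
    simp only [this]
    rw [← Finset.sum_mul, Finset.sum_sub_distrib]
    simp [flatsThrough]
  rw [hs]
  rcases Nat.eq_zero_or_pos (Fintype.card (Flat n k)) with h0 | h0
  · rw [h0]; simpa using hr
  · have hN : (0:ℝ) < Fintype.card (Flat n k) := by exact_mod_cast h0
    have hc' : (2:ℝ)^n * (flatsThrough n k x).card = Fintype.card (Flat n k) * 2^(n-k) := by
      exact_mod_cast hc
    have hp : (2:ℝ)^n = 2^(n-k) * 2^k := by rw [← pow_add]; congr 1; omega
    have hq : (0:ℝ) < 2^(n-k) := by positivity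
    have hc2 : (2:ℝ)^k * (flatsThrough n k x).card = Fintype.card (Flat n k) := by
      rw [hp] at hc'
      apply mul_left_cancel₀ hq.ne'
      linarith
    apply le_of_eq
    rw [← hc2] at hN ⊢
    have : ((flatsThrough n k x).card : ℝ) ≠ 0 := by
      intro h; rw [h] at hN; simp at hN
    field_simp

lemma prob_le (n k m : ℕ) (hnk : k ≤ n) :
    prob (Punif n k m) {V | 0 < Z n k m V} ≤ 2 ^ n * (1 - ((2:ℝ)^k)⁻¹) ^ m := by
  have hq : ∀ W, 0 ≤ q0 n k W := fun W => by unfold q0; positivity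
  have h1 : prob (Punif n k m) {V | 0 < Z n k m V}
      ≤ ∑ V : Fin m → Flat n k, ∑ x : F2n n, ∏ j, (if x ∉ (V j).1 then q0 n k (V j) else 0) := by
    unfold prob
    apply Finset.sum_le_sum
    intro V _
    have hnn : ∀ x ∈ (Finset.univ : Finset (F2n n)),
        0 ≤ ∏ j, (if x ∉ (V j).1 then q0 n k (V j) else 0) := by
      intro x _
      apply Finset.prod_nonneg
      intro j _
      split_ifs
      · exact le_rfl
      · exact hq _
    split_ifs with h
    · have h' : 0 < Z n k m V := h
      unfold Z at h'
      obtain ⟨⟨x, hx⟩⟩ := (Nat.card_pos_iff.mp h').1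
      refine le_trans (le_of_eq ?_) (Finset.single_le_sum hnn (Finset.mem_univ x))
      unfold Punif
      exact Finset.prod_congr rfl (fun j _ => by rw [if_pos (hx j)])
    · exact Finset.sum_nonneg hnn
  refine h1.trans ?_
  rw [Finset.sum_comm]
  have h2 : ∀ x : F2n n, ∑ V : Fin m → Flat n k, ∏ j, (if x ∉ (V j).1 then q0 n k (V j) else 0)
      ≤ (1 - ((2:ℝ)^k)⁻¹) ^ m := by
    intro x
    have := Finset.prod_univ_sum (fun _ : Fin m => (Finset.univ : Finset (Flat n k)))
      (fun _ W => if x ∉ W.1 then q0 n k W else 0)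
    rw [Fintype.piFinset_univ] at this
    rw [← this, Finset.prod_const, Finset.card_univ, Fintype.card_fin]
    refine pow_le_pow_left₀ (Finset.sum_nonneg ?_) (sum_avoid_le n k hnk x) m
    intro W _
    split_ifs
    · exact le_rfl
    · exact hq _
  refine (Finset.sum_le_sum (fun x _ => h2 x)).trans (le_of_eq ?_)
  simp [ZMod.card]

theorem stmt6 (k : ℕ) (hk : 1 ≤ k) (Δ : ℝ) (hΔk : DeltaK k < Δ) :
    Tendsto (fun n : ℕ =>
        prob (Punif n k ⌈Δ * (n:ℝ)⌉₊) {V | 0 < Z n k ⌈Δ * (n:ℝ)⌉₊ V})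
      atTop (nhds 0) := by
  set r : ℝ := 1 - ((2:ℝ)^k)⁻¹ with hr
  have hk2 : ((2:ℝ)^k)⁻¹ < 1 := inv_lt_one_of_one_lt₀ (one_lt_pow₀ (by norm_num) (by omega))
  have hk3 : 0 < ((2:ℝ)^k)⁻¹ := by positivity
  have hr0 : 0 < r := by linarith
  have hr1 : r < 1 := by linarith
  have hlog : Real.log r < 0 := Real.log_neg hr0 hr1
  have hlt : 2 * r ^ Δ < 1 := by
    unfold DeltaK at hΔk
    rw [← hr, div_lt_iff_of_neg hlog] at hΔk
    have h := Real.exp_lt_exp.mpr hΔk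
    rw [Real.exp_log (by norm_num), mul_comm, ← Real.rpow_def_of_pos hr0] at h
    linarith
  refine squeeze_zero' (g := fun n : ℕ => (2 * r ^ Δ) ^ n) ?_ ?_
    (tendsto_pow_atTop_nhds_zero_of_lt_one (by positivity) hlt)
  · refine Eventually.of_forall (fun n => ?_)
    unfold prob
    refine Finset.sum_nonneg (fun V _ => ?_)
    split_ifs
    · exact Finset.prod_nonneg (fun j _ => by unfold q0; positivity)
    · exact le_rfl
  · filter_upwards [eventually_ge_atTop k] with n hn
    refine (prob_le n k _ hn).trans ?_
    rw [mul_pow, ← hr, ← Real.rpow_natCast (r ^ Δ), ← Real.rpow_mul hr0.le, ← Real.rpow_natCast r]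
    gcongr 2 ^ n * ?_
    exact Real.rpow_le_rpow_of_exponent_ge hr0 hr1.le (Nat.le_ceil _)
end

section
/- Let 1 ≤ k ≤ n, let U ⊆ Fun be the F_2-linear span of the monomial functions x ↦ Π_{s ∈ S} x_s over subsets S ⊆ {1,…,n} with |S| ≤ k, and let N_k := Σ_{i=0}^k C(n,i). Note that the indicator function 1_W of any k-flat W lies in U, and const 1 ∈ U. Let V = (V_1,…,V_m) be m i.i.d. uniform k-flats of F_2^n (law P_unif). Then the probability that there exists an F_2-linear functional φ : U → F_2 with φ(const 1) = 1 and φ(1_{V_j}) = 0 for all j ∈ [m] is at most 2^{N_k} (1 − 2^{−k})^m. -/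
open scoped BigOperators Classical
open Filter Topology

def monomialSpan (n k : ℕ) : Submodule (ZMod 2) (F2n n → ZMod 2) :=
  Submodule.span (ZMod 2)
    {f : F2n n → ZMod 2 | ∃ S : Finset (Fin n), S.card ≤ k ∧ f = fun x => ∏ s ∈ S, x s}

abbrev Dirs (n k : ℕ) := {D : Submodule (ZMod 2) (F2n n) // Module.finrank (ZMod 2) D = n - k}

lemma isFlat_coset (n k : ℕ) (D : Dirs n k) (c : F2n n ⧸ D.1) :
    IsFlat n k {x | D.1.mkQ x = c} := by
  obtain ⟨x, rfl⟩ := D.1.mkQ_surjective c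
  refine ⟨AffineSubspace.mk' x D.1, ?_, ⟨x, rfl⟩, ?_⟩
  · ext y
    simp only [SetLike.mem_coe, AffineSubspace.mem_mk', Set.mem_setOf_eq, Submodule.mkQ_apply,
      Submodule.Quotient.eq, vsub_eq_sub]
  · rw [AffineSubspace.direction_mk']; exact D.2

def cosetFlat (n k : ℕ) (p : Σ D : Dirs n k, F2n n ⧸ D.1) : Flat n k :=
  ⟨{x | p.1.1.mkQ x = p.2}, isFlat_coset n k p.1 p.2⟩

lemma cosetFlat_bij (n k : ℕ) : Function.Bijective (cosetFlat n k) := by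
  constructor
  · rintro ⟨D, c⟩ ⟨D', c'⟩ h
    have h : ∀ y, D.1.mkQ y = c ↔ D'.1.mkQ y = c' := fun y => Set.ext_iff.mp (Subtype.ext_iff.mp h) y
    obtain ⟨x, rfl⟩ := D.1.mkQ_surjective c
    have hx := (h x).1 rfl
    subst hx
    have hD : D = D' := by
      apply Subtype.ext
      ext y
      have := h (y + x)
      simpa only [Submodule.mkQ_apply, Submodule.Quotient.eq, add_sub_cancel_right] using this
    subst hD
    rfl
  · rintro ⟨W, A, rfl, ⟨x, hx⟩, hA⟩
    refine ⟨⟨⟨A.direction, hA⟩, A.direction.mkQ x⟩, ?_⟩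
    apply Subtype.ext
    ext y
    simp only [cosetFlat, Set.mem_setOf_eq, Submodule.mkQ_apply, Submodule.Quotient.eq]
    rw [← vsub_eq_sub]
    exact AffineSubspace.vsub_right_mem_direction_iff_mem hx y

lemma card_quot (n k : ℕ) (hkn : k ≤ n) (D : Dirs n k) :
    Fintype.card (F2n n ⧸ D.1) = 2 ^ k := by
  rw [Module.card_eq_pow_finrank (K := ZMod 2), ZMod.card]
  have h1 := Submodule.finrank_quotient_add_finrank D.1
  have h2 : Module.finrank (ZMod 2) (F2n n) = n := by simp
  have h3 := D.2
  congr 1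
  omega

lemma bad_le (n k : ℕ) (hkn : k ≤ n)
    (hconst : (fun _ => (1 : ZMod 2)) ∈ monomialSpan n k)
    (hind : ∀ W : Flat n k, Set.indicator W.1 1 ∈ monomialSpan n k)
    (φ : (monomialSpan n k) →ₗ[ZMod 2] ZMod 2) (h1 : φ ⟨fun _ => 1, hconst⟩ = 1) :
    (∑ W : Flat n k, if φ ⟨Set.indicator W.1 1, hind W⟩ = 0 then q0 n k W else 0)
      ≤ 1 - ((2:ℝ)^k)⁻¹ := by
  let e := Equiv.ofBijective _ (cosetFlat_bij n k)
  have hcard : (Fintype.card (Flat n k) : ℝ) = Fintype.card (Dirs n k) * 2 ^ k := by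
    rw [← Fintype.card_congr e, Fintype.card_sigma]
    simp_rw [card_quot n k hkn]
    simp
  have key : (∑ W : Flat n k, if φ ⟨Set.indicator W.1 1, hind W⟩ = 0 then (1:ℝ) else 0)
      ≤ Fintype.card (Dirs n k) * (2 ^ k - 1) := by
    rw [← e.sum_comp, Fintype.sum_sigma, ← nsmul_eq_mul, ← Finset.card_univ]
    apply Finset.sum_le_card_nsmul
    intro D _
    have hs : ∑ c : F2n n ⧸ D.1, (⟨_, hind (e ⟨D, c⟩)⟩ : monomialSpan n k)
        = ⟨fun _ => 1, hconst⟩ := by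
      apply Subtype.ext
      rw [AddSubmonoidClass.coe_finsetSum]
      ext x
      rw [Finset.sum_apply]
      simp only [e, Equiv.ofBijective_apply, cosetFlat, Set.indicator_apply, Set.mem_setOf_eq]
      rw [Finset.sum_eq_single (D.1.mkQ x)]
      · simp
      · intro c _ hc
        rw [if_neg (Ne.symm hc)]
      · simp
    have hex : ∃ c : F2n n ⧸ D.1, φ ⟨_, hind (e ⟨D, c⟩)⟩ ≠ 0 := by
      by_contra! hcon
      have := congrArg φ hs
      rw [map_sum, Finset.sum_eq_zero (fun c _ => hcon c), h1] at this
      exact zero_ne_one this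
    obtain ⟨c, hc⟩ := hex
    rw [← Finset.add_sum_erase _ _ (Finset.mem_univ c), if_neg hc, zero_add]
    refine (Finset.sum_le_card_nsmul _ _ 1 ?_).trans ?_
    · intro d _
      split_ifs <;> norm_num
    · rw [Finset.card_erase_of_mem (Finset.mem_univ c), Finset.card_univ, card_quot n k hkn]
      rw [nsmul_eq_mul, mul_one, Nat.cast_sub Nat.one_le_two_pow]
      simp
  have h2k : (1:ℝ) ≤ 2 ^ k := one_le_pow₀ (by norm_num)
  have heq : (∑ W : Flat n k, if φ ⟨Set.indicator W.1 1, hind W⟩ = 0 then q0 n k W else 0)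
      = (∑ W : Flat n k, if φ ⟨Set.indicator W.1 1, hind W⟩ = 0 then (1:ℝ) else 0)
        * (Fintype.card (Flat n k) : ℝ)⁻¹ := by
    rw [Finset.sum_mul]
    refine Finset.sum_congr rfl fun W _ => ?_
    split_ifs <;> simp [q0]
  rw [heq, hcard]
  rcases Nat.eq_zero_or_pos (Fintype.card (Dirs n k)) with h0 | h0
  · rw [h0]
    simp only [Nat.cast_zero, zero_mul, inv_zero, mul_zero, sub_nonneg]
    exact inv_le_one_of_one_le₀ h2k
  · have h0' : (0:ℝ) < Fintype.card (Dirs n k) := by exact_mod_cast h0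
    refine (mul_le_mul_of_nonneg_right key (by positivity)).trans (le_of_eq ?_)
    field_simp

lemma finrank_le (n k : ℕ) : Module.finrank (ZMod 2) (monomialSpan n k)
    ≤ ∑ i ∈ Finset.range (k+1), n.choose i := by
  let T : Finset (Finset (Fin n)) := (Finset.range (k+1)).biUnion fun i => Finset.powersetCard i Finset.univ
  let g : Finset (Fin n) → (F2n n → ZMod 2) := fun S x => ∏ s ∈ S, x s
  have hset : monomialSpan n k = Submodule.span (ZMod 2) ((T.image g : Finset _) : Set (F2n n → ZMod 2)) := by
    unfold monomialSpan
    congr 1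
    ext f
    simp [T, g, eq_comm, Nat.lt_succ_iff]
  rw [hset]
  refine (finrank_span_finset_le_card _).trans (Finset.card_image_le.trans ?_)
  refine Finset.card_biUnion_le.trans (le_of_eq ?_)
  simp

theorem stmt13 (n k m : ℕ) (hk : 1 ≤ k) (hkn : k ≤ n)
    (hconst : (fun _ => (1 : ZMod 2)) ∈ monomialSpan n k)
    (hind : ∀ W : Flat n k, Set.indicator W.1 1 ∈ monomialSpan n k) :
    prob (Punif n k m)
      {V | ∃ φ : (monomialSpan n k) →ₗ[ZMod 2] ZMod 2,
          φ ⟨fun _ => 1, hconst⟩ = 1 ∧ ∀ j : Fin m, φ ⟨Set.indicator (V j).1 1, hind (V j)⟩ = 0}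
      ≤ (2:ℝ) ^ (∑ i ∈ Finset.range (k+1), n.choose i) * (1 - ((2:ℝ)^k)⁻¹) ^ m := by
  have hfin : Finite ((monomialSpan n k) →ₗ[ZMod 2] ZMod 2) := Module.finite_of_finite (ZMod 2)
  let _ : Fintype ((monomialSpan n k) →ₗ[ZMod 2] ZMod 2) := Fintype.ofFinite _
  have hq : ∀ W, 0 ≤ q0 n k W := fun W => by unfold q0; positivity
  have h2k : (1:ℝ) ≤ 2 ^ k := one_le_pow₀ (by norm_num)
  have hnn : 0 ≤ 1 - ((2:ℝ)^k)⁻¹ := sub_nonneg.2 (inv_le_one_of_one_le₀ h2k)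
  have hcard : (Fintype.card ((monomialSpan n k) →ₗ[ZMod 2] ZMod 2) : ℝ)
      ≤ (2:ℝ) ^ (∑ i ∈ Finset.range (k+1), n.choose i) := by
    rw [Module.card_eq_pow_finrank (K := ZMod 2), ZMod.card, Module.finrank_linearMap_self]
    push_cast
    exact pow_le_pow_right₀ (by norm_num) (finrank_le n k)
  let t : ((monomialSpan n k) →ₗ[ZMod 2] ZMod 2) → (Fin m → Flat n k) → ℝ := fun φ V =>
    if φ ⟨fun _ => 1, hconst⟩ = 1 then
      ∏ j, (if φ ⟨Set.indicator (V j).1 1, hind (V j)⟩ = 0 then q0 n k (V j) else 0) else 0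
  have ht : ∀ φ V, 0 ≤ t φ V := by
    intro φ V
    simp only [t]
    split_ifs
    · exact Finset.prod_nonneg fun j _ => by split_ifs <;> simp [hq]
    · exact le_rfl
  have hsum : ∀ φ, ∑ V, t φ V ≤ (1 - ((2:ℝ)^k)⁻¹) ^ m := by
    intro φ
    by_cases h1 : φ ⟨fun _ => 1, hconst⟩ = 1
    · simp only [t, if_pos h1]
      have := Finset.prod_univ_sum (fun _ : Fin m => (Finset.univ : Finset (Flat n k)))
        (fun _ W => if φ ⟨Set.indicator W.1 1, hind W⟩ = 0 then q0 n k W else 0)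
      rw [Fintype.piFinset_univ] at this
      rw [← this, Finset.prod_const, Finset.card_univ, Fintype.card_fin]
      refine pow_le_pow_left₀ (Finset.sum_nonneg fun W _ => ?_) (bad_le n k hkn hconst hind φ h1) m
      split_ifs <;> simp [hq]
    · simp only [t, if_neg h1, Finset.sum_const_zero]
      positivity
  calc prob (Punif n k m) _ ≤ ∑ V, ∑ φ, t φ V := by
        unfold prob
        refine Finset.sum_le_sum fun V _ => ?_
        split_ifs with hV
        · obtain ⟨φ, h1, h2⟩ := hV
          refine le_trans (le_of_eq ?_)
            (Finset.single_le_sum (fun φ _ => ht φ V) (Finset.mem_univ φ))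
          simp only [t, if_pos h1, h2, if_true, Punif]
        · exact Finset.sum_nonneg fun φ _ => ht φ V
    _ = ∑ φ, ∑ V, t φ V := Finset.sum_comm
    _ ≤ ∑ _φ : (monomialSpan n k) →ₗ[ZMod 2] ZMod 2, (1 - ((2:ℝ)^k)⁻¹) ^ m :=
        Finset.sum_le_sum fun φ _ => hsum φ
    _ ≤ _ := by
        rw [Finset.sum_const, nsmul_eq_mul, Finset.card_univ]
        exact mul_le_mul_of_nonneg_right hcard (pow_nonneg hnn m)
end

section
/- Fix k ≥ 1 and Δ > Δ_k, and for each n ≥ k let m = ⌈Δ n^k⌉. Define the test ψ_L on m-tuples V = (V_1,…,V_m) of k-flats of F_2^n by ψ_L(V) = 1 iff there exists an F_2-linear functional φ : U → F_2 with φ(const 1) = 1 and φ(1_{V_j}) = 0 for all j. Then max( P_unif(ψ_L = 1), P_planted(ψ_L = 0) ) → 0 as n → ∞; in fact P_planted(ψ_L = 0) = 0 for every n. -/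
open scoped BigOperators Classical
open Filter Topology

/-- The event that the relaxed linear system `L_V` has a solution, i.e. that there is a linear
functional on the span of monomials of degree at most `k` sending the constant function `1` to `1`
and the indicator of each flat `V j` to `0`. -/
def psiL (n k m : ℕ) (hconst : (fun _ => (1 : ZMod 2)) ∈ monomialSpan n k)
    (hind : ∀ W : Flat n k, Set.indicator W.1 1 ∈ monomialSpan n k)
    (V : Fin m → Flat n k) : Prop :=
  ∃ φ : (monomialSpan n k) →ₗ[ZMod 2] ZMod 2,
    φ ⟨fun _ => 1, hconst⟩ = 1 ∧ ∀ j : Fin m, φ ⟨Set.indicator (V j).1 1, hind (V j)⟩ = 0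

lemma psiL_of_avoid (n k m : ℕ) (hconst : (fun _ => (1 : ZMod 2)) ∈ monomialSpan n k)
    (hind : ∀ W : Flat n k, Set.indicator W.1 1 ∈ monomialSpan n k)
    (V : Fin m → Flat n k) (x : F2n n) (hx : ∀ j, x ∉ (V j).1) : psiL n k m hconst hind V := by
  refine ⟨(LinearMap.proj x).comp (monomialSpan n k).subtype, ?_, fun j => ?_⟩
  · simp
  · simp [hx j]

lemma planted_zero (n k m : ℕ) (hconst : (fun _ => (1 : ZMod 2)) ∈ monomialSpan n k)
    (hind : ∀ W : Flat n k, Set.indicator W.1 1 ∈ monomialSpan n k) :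
    prob (Pplanted n k m) {V | ¬ psiL n k m hconst hind V} = 0 := by
  unfold prob
  refine Finset.sum_eq_zero fun V _ => ?_
  split_ifs with h
  · unfold Pplanted
    rw [Finset.sum_eq_zero, mul_zero]
    intro x _
    by_cases hx : ∀ j, x ∉ (V j).1
    · exact absurd (psiL_of_avoid n k m hconst hind V x hx) h
    · push Not at hx
      obtain ⟨j, hj⟩ := hx
      exact Finset.prod_eq_zero (Finset.mem_univ j) (by simp [qx, hj])
  · rfl

lemma dim_le (n k : ℕ) : Module.finrank (ZMod 2) (monomialSpan n k) ≤ (n + 1) ^ k := by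
  let f : (Fin k → Option (Fin n)) → (F2n n → ZMod 2) := fun g x =>
    ∏ s ∈ Finset.univ.filter (fun s : Fin n => ∃ i, g i = some s), x s
  have hsub : monomialSpan n k ≤ Submodule.span (ZMod 2) (Set.range f) := by
    apply Submodule.span_mono
    rintro _ ⟨S, hS, rfl⟩
    refine ⟨fun i => if h : (i : ℕ) < S.card then some (S.equivFin.symm ⟨i, h⟩) else none, ?_⟩
    funext x
    simp only [f]
    congr 1
    ext s
    simp only [Finset.mem_filter, Finset.mem_univ, true_and]
    constructor
    · rintro ⟨i, hi⟩
      split_ifs at hi with h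
      simp only [Option.some.injEq] at hi
      rw [← hi]
      exact Subtype.coe_prop _
    · intro hs
      refine ⟨⟨S.equivFin ⟨s, hs⟩, lt_of_lt_of_le (Fin.is_lt _) hS⟩, ?_⟩
      simp
  calc _ ≤ Module.finrank (ZMod 2) (Submodule.span (ZMod 2) (Set.range f)) :=
        Submodule.finrank_mono hsub
    _ ≤ Fintype.card (Fin k → Option (Fin n)) := finrank_range_le_card f
    _ = _ := by simp

lemma card_dual_le (n k : ℕ) :
    Nat.card (monomialSpan n k →ₗ[ZMod 2] ZMod 2) ≤ 2 ^ ((n + 1) ^ k) := by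
  have h := Module.natCard_eq_pow_finrank (K := ZMod 2)
    (V := Module.Dual (ZMod 2) (monomialSpan n k))
  rw [Subspace.dual_finrank_eq] at h
  change Nat.card (Module.Dual (ZMod 2) (monomialSpan n k)) ≤ _
  rw [h]
  simp only [Nat.card_zmod]
  exact Nat.pow_le_pow_right (by norm_num) (dim_le n k)

/-- Translate of a flat. -/
def Flat.tr {n k : ℕ} (a : F2n n) (W : Flat n k) : Flat n k :=
  ⟨{x | x - a ∈ W.1}, by
    obtain ⟨A, hA, ⟨w, hw⟩, hd⟩ := W.2
    refine ⟨A.map (AffineEquiv.constVAdd (ZMod 2) (F2n n) a).toAffineMap, ?_, ⟨w + a, by simpa⟩, ?_⟩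
    · ext x
      simp only [AffineSubspace.coe_map, Set.mem_image, Set.mem_ofPred_eq, ← hA]
      constructor
      · rintro ⟨y, hy, rfl⟩
        simpa using hy
      · intro h
        exact ⟨x - a, h, by simp⟩
    · rw [AffineSubspace.map_direction]
      rw [← hd]
      exact LinearEquiv.finrank_map_eq (AffineEquiv.constVAdd (ZMod 2) (F2n n) a).linear A.direction⟩

lemma Flat.mem_tr {n k : ℕ} (a x : F2n n) (W : Flat n k) : x ∈ (W.tr a).1 ↔ x - a ∈ W.1 := Iff.rfl

def Flat.trEquiv {n k : ℕ} (a : F2n n) : Flat n k ≃ Flat n k where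
  toFun := Flat.tr a
  invFun := Flat.tr (-a)
  left_inv W := by apply Subtype.ext; ext x; simp [Flat.mem_tr]
  right_inv W := by apply Subtype.ext; ext x; simp [Flat.mem_tr]

lemma many_translates (n k : ℕ) (hconst : (fun _ => (1 : ZMod 2)) ∈ monomialSpan n k)
    (hind : ∀ W : Flat n k, Set.indicator W.1 1 ∈ monomialSpan n k)
    (φ : monomialSpan n k →ₗ[ZMod 2] ZMod 2) (hφ : φ ⟨fun _ => 1, hconst⟩ = 1) (W : Flat n k) :
    2 ^ (n - k) ≤ (Finset.univ.filter (fun a : F2n n =>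
      φ ⟨Set.indicator (W.tr a).1 1, hind (W.tr a)⟩ ≠ 0)).card := by
  obtain ⟨A, hA, ⟨w, hw⟩, hd⟩ := W.2
  obtain ⟨C, hC⟩ := Submodule.exists_isCompl A.direction
  have hmem : ∀ x, x ∈ W.1 ↔ x - w ∈ A.direction := by
    intro x
    rw [← hA] at hw ⊢
    exact (AffineSubspace.vsub_right_mem_direction_iff_mem hw x).symm
  have hsum : (⟨fun _ => 1, hconst⟩ : monomialSpan n k) =
      ∑ c : C, ⟨Set.indicator (W.tr (c : F2n n)).1 1, hind _⟩ := by
    apply Subtype.ext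
    rw [AddSubmonoidClass.coe_finsetSum]
    funext y
    simp only [Finset.sum_apply]
    obtain ⟨d, c, hdc, huniq⟩ := Submodule.existsUnique_add_of_isCompl hC (y - w)
    rw [Finset.sum_eq_single c]
    · have : y ∈ (W.tr (c : F2n n)).1 := by
        rw [Flat.mem_tr, hmem]
        have : y - (c : F2n n) - w = d := by
          rw [sub_right_comm, ← hdc]; simp
        rw [this]; exact d.2
      simp [this]
    · intro c' _ hc'
      have : y ∉ (W.tr (c' : F2n n)).1 := by
        rw [Flat.mem_tr, hmem]
        intro h
        exact hc' (huniq ⟨_, h⟩ c' (by simp; abel)).2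
      simp [this]
    · simp
  have hex : ∃ c : F2n n, φ ⟨Set.indicator (W.tr c).1 1, hind (W.tr c)⟩ ≠ 0 := by
    by_contra! hcon
    rw [hsum, map_sum] at hφ
    exact zero_ne_one ((Finset.sum_eq_zero (fun c _ => hcon _)).symm.trans hφ)
  obtain ⟨c, hc⟩ := hex
  have hcard : Fintype.card A.direction = 2 ^ (n - k) := by
    rw [Module.card_eq_pow_finrank (K := ZMod 2), hd, ZMod.card]
  rw [← hcard, ← Finset.card_univ]
  refine Finset.card_le_card_of_injOn (fun d => c + (d : F2n n)) ?_ ?_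
  · intro d _
    simp only [Finset.coe_filter, Finset.mem_univ, true_and, Set.mem_ofPred_eq]
    have : W.tr (c + (d : F2n n)) = W.tr c := by
      apply Subtype.ext
      ext x
      rw [Flat.mem_tr, Flat.mem_tr, hmem, hmem,
        show x - (c + (d : F2n n)) - w = (x - c - w) - d by abel]
      exact Submodule.sub_mem_iff_left _ d.2
    rw [this]
    exact hc
  · intro d _ d' _ h
    exact Subtype.ext (add_left_cancel h)

lemma frac_le (n k : ℕ) (hconst : (fun _ => (1 : ZMod 2)) ∈ monomialSpan n k)
    (hind : ∀ W : Flat n k, Set.indicator W.1 1 ∈ monomialSpan n k)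
    (φ : monomialSpan n k →ₗ[ZMod 2] ZMod 2) (hφ : φ ⟨fun _ => 1, hconst⟩ = 1) :
    ∑ W : Flat n k, (if φ ⟨Set.indicator W.1 1, hind W⟩ = 0 then q0 n k W else 0)
      ≤ 1 - ((2:ℝ)^k)⁻¹ := by
  have hp : ((2:ℝ)^k)⁻¹ ≤ 1 := inv_le_one_of_one_le₀ (one_le_pow₀ (by norm_num))
  set N1 := (Finset.univ.filter
    (fun W : Flat n k => φ ⟨Set.indicator W.1 1, hind W⟩ ≠ 0)).card with hN1
  set N0 := (Finset.univ.filter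
    (fun W : Flat n k => φ ⟨Set.indicator W.1 1, hind W⟩ = 0)).card with hN0
  have hN : N0 + N1 = Fintype.card (Flat n k) := by
    rw [hN0, hN1, Finset.card_filter_add_card_filter_not, Finset.card_univ]
  have hdc : Fintype.card (Flat n k) * 2 ^ (n - k) ≤ 2 ^ n * N1 := by
    calc Fintype.card (Flat n k) * 2 ^ (n - k) = ∑ _W : Flat n k, 2 ^ (n - k) := by simp
      _ ≤ ∑ W : Flat n k, (Finset.univ.filter (fun a : F2n n =>
            φ ⟨Set.indicator (W.tr a).1 1, hind (W.tr a)⟩ ≠ 0)).card :=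
          Finset.sum_le_sum fun W _ => many_translates n k hconst hind φ hφ W
      _ = ∑ a : F2n n, ∑ W : Flat n k,
            (if φ ⟨Set.indicator (W.tr a).1 1, hind (W.tr a)⟩ ≠ 0 then 1 else 0) := by
          rw [Finset.sum_comm]
          simp only [Finset.card_filter]
      _ = ∑ a : F2n n, N1 := by
          refine Finset.sum_congr rfl fun a _ => ?_
          rw [hN1, Finset.card_filter]
          exact Equiv.sum_comp (Flat.trEquiv a)
            (fun W => if φ ⟨Set.indicator W.1 1, hind W⟩ ≠ 0 then 1 else 0)
      _ = 2 ^ n * N1 := by simp [ZMod.card]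
  have hdc2 : Fintype.card (Flat n k) ≤ 2 ^ k * N1 := by
    have h1 : 2 ^ n * N1 ≤ (2 ^ k * N1) * 2 ^ (n - k) := by
      have : 2 ^ n ≤ 2 ^ k * 2 ^ (n - k) := by
        rw [← pow_add]; exact Nat.pow_le_pow_right (by norm_num) (by omega)
      calc _ ≤ (2 ^ k * 2 ^ (n - k)) * N1 := Nat.mul_le_mul_right _ this
        _ = _ := by ring
    exact Nat.le_of_mul_le_mul_right (hdc.trans h1) (by positivity)
  rw [← Finset.sum_filter]
  simp only [q0, Finset.sum_const, nsmul_eq_mul]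
  rw [← hN0]
  rcases Nat.eq_zero_or_pos (Fintype.card (Flat n k)) with h0 | hpos
  · rw [h0]; simpa using hp
  · have hpos' : (0:ℝ) < Fintype.card (Flat n k) := by exact_mod_cast hpos
    have hNr : (N0:ℝ) + N1 = Fintype.card (Flat n k) := by exact_mod_cast hN
    have hdr : (Fintype.card (Flat n k) : ℝ) ≤ 2 ^ k * N1 := by exact_mod_cast hdc2
    rw [← div_eq_mul_inv, div_le_iff₀ hpos', sub_mul, one_mul]
    have : ((2:ℝ)^k)⁻¹ * Fintype.card (Flat n k) ≤ N1 := by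
      rw [inv_mul_le_iff₀ (by positivity)]; exact hdr
    linarith

lemma unif_le (n k m : ℕ) (hconst : (fun _ => (1 : ZMod 2)) ∈ monomialSpan n k)
    (hind : ∀ W : Flat n k, Set.indicator W.1 1 ∈ monomialSpan n k) :
    prob (Punif n k m) {V | psiL n k m hconst hind V}
      ≤ 2 ^ ((n + 1) ^ k) * (1 - ((2:ℝ)^k)⁻¹) ^ m := by
  let Φ := monomialSpan n k →ₗ[ZMod 2] ZMod 2
  have : Finite Φ := Finite.of_injective (fun φ : Φ => (φ : monomialSpan n k → ZMod 2)) DFunLike.coe_injective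
  have : Fintype Φ := Fintype.ofFinite _
  have hp : 0 ≤ 1 - ((2:ℝ)^k)⁻¹ :=
    sub_nonneg.2 (inv_le_one_of_one_le₀ (one_le_pow₀ (by norm_num)))
  have hq : ∀ W : Flat n k, 0 ≤ q0 n k W := fun W => by unfold q0; positivity
  let g : Φ → Flat n k → ℝ := fun φ W =>
    if φ ⟨Set.indicator W.1 1, hind W⟩ = 0 then q0 n k W else 0
  have hg : ∀ φ W, 0 ≤ g φ W := fun φ W => by
    simp only [g]; split_ifs; exacts [hq W, le_rfl]
  let S : Finset Φ := Finset.univ.filter (fun φ => φ ⟨fun _ => 1, hconst⟩ = 1)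
  calc prob (Punif n k m) {V | psiL n k m hconst hind V}
      ≤ ∑ V : Fin m → Flat n k, ∑ φ ∈ S, ∏ j, g φ (V j) := by
        unfold prob
        refine Finset.sum_le_sum fun V _ => ?_
        have hnn : ∀ φ ∈ S, 0 ≤ ∏ j, g φ (V j) := fun φ _ =>
          Finset.prod_nonneg fun j _ => hg φ _
        split_ifs with h
        · obtain ⟨φ, h1, h2⟩ := h
          have hS : φ ∈ S := by simp [S, h1]
          refine le_trans (le_of_eq ?_) (Finset.single_le_sum hnn hS)
          unfold Punif
          refine Finset.prod_congr rfl fun j _ => ?_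
          simp [g, h2 j]
        · exact Finset.sum_nonneg hnn
    _ = ∑ φ ∈ S, (∑ W, g φ W) ^ m := by
        rw [Finset.sum_comm]
        refine Finset.sum_congr rfl fun φ _ => ?_
        rw [Fintype.sum_pow]
    _ ≤ ∑ φ ∈ S, (1 - ((2:ℝ)^k)⁻¹) ^ m := by
        refine Finset.sum_le_sum fun φ hφ => ?_
        refine pow_le_pow_left₀ (Finset.sum_nonneg fun W _ => hg φ W) ?_ m
        exact frac_le n k hconst hind φ (by simpa [S] using hφ)
    _ ≤ 2 ^ ((n + 1) ^ k) * (1 - ((2:ℝ)^k)⁻¹) ^ m := by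
        rw [Finset.sum_const, nsmul_eq_mul]
        refine mul_le_mul_of_nonneg_right ?_ (pow_nonneg hp m)
        have h1 : S.card ≤ 2 ^ ((n + 1) ^ k) := by
          refine (Finset.card_le_univ S).trans ?_
          rw [← Nat.card_eq_fintype_card]
          exact card_dual_le n k
        exact_mod_cast h1

lemma unif_nonneg (n k m : ℕ) (E : Set (Fin m → Flat n k)) : 0 ≤ prob (Punif n k m) E := by
  unfold prob
  refine Finset.sum_nonneg fun V _ => ?_
  split_ifs
  · unfold Punif q0
    positivity
  · exact le_rfl

lemma bound_tendsto (k : ℕ) (hk : 1 ≤ k) (Δ : ℝ) (hΔk : DeltaK k < Δ) :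
    Tendsto (fun n : ℕ => (2:ℝ) ^ ((n + 1) ^ k) * (1 - ((2:ℝ)^k)⁻¹) ^ ⌈Δ * (n:ℝ)^k⌉₊)
      atTop (nhds 0) := by
  set p : ℝ := 1 - ((2:ℝ)^k)⁻¹ with hpdef
  have h2k : (1:ℝ) < 2 ^ k := one_lt_pow₀ (by norm_num) (by omega)
  have hp0 : 0 < p := sub_pos.2 (inv_lt_one_of_one_lt₀ h2k)
  have hp1 : p < 1 := by
    have : (0:ℝ) < ((2:ℝ)^k)⁻¹ := by positivity
    linarith
  have hlog : Real.log p < 0 := Real.log_neg hp0 hp1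
  have hneg : Real.log 2 + Δ * Real.log p < 0 := by
    unfold DeltaK at hΔk
    rw [← hpdef, div_lt_iff_of_neg hlog, one_div, Real.log_inv] at hΔk
    linarith
  have hlim : Tendsto (fun n : ℕ => Real.log 2 * ((n:ℝ) + 1) ^ k + Δ * (n:ℝ) ^ k * Real.log p)
      atTop atBot := by
    have h1 : Tendsto (fun n : ℕ => Real.log 2 * (1 + 1 / (n:ℝ)) ^ k + Δ * Real.log p) atTop
        (nhds (Real.log 2 * (1 + 0) ^ k + Δ * Real.log p)) :=
      (((tendsto_const_nhds.add tendsto_one_div_atTop_nhds_zero_nat).pow k).const_mul _).add_const _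
    have h2 : Tendsto (fun n : ℕ => (n:ℝ) ^ k) atTop atTop :=
      (tendsto_pow_atTop (by omega)).comp tendsto_natCast_atTop_atTop
    have h3 := h2.atTop_mul_neg (by simpa using hneg) h1
    refine h3.congr' ?_
    filter_upwards [eventually_gt_atTop 0] with n hn
    have hn' : (n:ℝ) ≠ 0 := by positivity
    have : ((n:ℝ) + 1) = n * (1 + 1 / (n:ℝ)) := by field_simp
    rw [this, mul_pow]
    ring
  refine squeeze_zero (fun n => by positivity) (fun n => ?_) (Real.tendsto_exp_atBot.comp hlim)
  simp only [Function.comp]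
  rw [Real.exp_add]
  refine mul_le_mul (le_of_eq ?_) ?_ (by positivity) (by positivity)
  · rw [← Real.rpow_natCast, Real.rpow_def_of_pos (by norm_num)]
    push_cast
    rfl
  · rw [← Real.rpow_natCast, Real.rpow_def_of_pos hp0, Real.exp_le_exp, mul_comm]
    exact mul_le_mul_of_nonpos_right (Nat.le_ceil _) hlog.le

theorem stmt14 (k : ℕ) (hk : 1 ≤ k) (Δ : ℝ) (hΔk : DeltaK k < Δ)
    (hconst : ∀ n : ℕ, (fun _ => (1 : ZMod 2)) ∈ monomialSpan n k)
    (hind : ∀ (n : ℕ) (W : Flat n k), Set.indicator W.1 1 ∈ monomialSpan n k) :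
    Tendsto (fun n : ℕ =>
        max (prob (Punif n k ⌈Δ * (n:ℝ)^k⌉₊)
              {V | psiL n k ⌈Δ * (n:ℝ)^k⌉₊ (hconst n) (hind n) V})
            (prob (Pplanted n k ⌈Δ * (n:ℝ)^k⌉₊)
              {V | ¬ psiL n k ⌈Δ * (n:ℝ)^k⌉₊ (hconst n) (hind n) V}))
      atTop (nhds 0)
    ∧ ∀ n : ℕ, k ≤ n →
        prob (Pplanted n k ⌈Δ * (n:ℝ)^k⌉₊)
          {V | ¬ psiL n k ⌈Δ * (n:ℝ)^k⌉₊ (hconst n) (hind n) V} = 0 := by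
  refine ⟨?_, fun n _ => planted_zero n k _ (hconst n) (hind n)⟩
  refine squeeze_zero (fun n => le_max_of_le_left (unif_nonneg _ _ _ _)) (fun n => ?_)
    (bound_tendsto k hk Δ hΔk)
  rw [planted_zero, max_eq_left (unif_nonneg _ _ _ _)]
  exact unif_le n k _ (hconst n) (hind n)
end
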